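/- Let C be a complete category with a strongly generating class of objects X, and U : A → C a functor such that every object x in X admits a reflection along U (i.e. the functor C(x, U−) : A → Set is representable). Then U preserves all limits that exist in A. -/

import Mathlib

/-!
For a limit cone `c` over `D`, the cone `U c` is a limit as soon as the comparison map from
`U (lim D)` to the limit of `D ⋙ U` is an isomorphism, and by strong generation this may be
tested after applying `C(x, −)` with `x ∈ X`. There it becomes a map of cones between two limit
cones, hence a bijection: `C(x, −)` preserves the limit of `D ⋙ U`, and `C(x, U −)`, being
corepresentable, preserves the limit `c`.
-/

open CategoryTheory Limits

/-- Let `C` be a complete category with a strongly generating class of objects `X`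
(i.e. the functors `C(x, −)` for `x ∈ X` jointly reflect isomorphisms), and let
`U : A ⥤ C` be a functor such that each `x ∈ X` admits a reflection along `U`, i.e. the
functor `a ↦ C(x, U a)` is corepresentable.  Then `U` preserves all limits that exist in
`A`. -/
theorem preserves_existing_limits_of_reflections
    {C : Type u₁} [Category.{v} C] {A : Type u₂} [Category.{v} A]
    [HasLimits C]
    (X : Set C)
    (hgen : ∀ {a b : C} (f : a ⟶ b),
      (∀ x ∈ X, Function.Bijective fun g : x ⟶ a => g ≫ f) → IsIso f)
    (U : A ⥤ C)
    (hrefl : ∀ x ∈ X, (U ⋙ coyoneda.obj (Opposite.op x)).IsCorepresentable) :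
    ∀ {J : Type v} [SmallCategory J] (D : J ⥤ A) (c : Cone D),
      IsLimit c → Nonempty (IsLimit (U.mapCone c)) := by
  intro J _ D c hc
  have h_iso : IsIso ((limit.isLimit (D ⋙ U)).lift (U.mapCone c)) := by
    refine hgen _ fun x hx => ?_
    have := hrefl x hx
    let G := coyoneda.obj (Opposite.op x)
    have h₁ : IsLimit (G.mapCone (U.mapCone c)) := isLimitOfPreserves (U ⋙ G) hc
    have h₂ : IsLimit (G.mapCone (limit.cone (D ⋙ U))) :=
      isLimitOfPreserves G (limit.isLimit _)
    have h_map : G.map ((limit.isLimit (D ⋙ U)).lift (U.mapCone c)) =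
        (h₁.conePointUniqueUpToIso h₂).hom := by
      refine h₂.hom_ext fun j => ?_
      rw [h₁.conePointUniqueUpToIso_hom_comp h₂ j]
      simp only [Functor.mapCone_π_app, ← Functor.map_comp, IsLimit.fac]
    have h_G : IsIso (G.map ((limit.isLimit (D ⋙ U)).lift (U.mapCone c))) := by
      rw [h_map]; infer_instance
    exact (isIso_iff_bijective _).1 h_G
  exact ⟨IsLimit.ofPointIso (limit.isLimit (D ⋙ U))⟩
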